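/- Let X and Y be topological spaces with X Hausdorff, let Φ : X → Y be a continuous map, and let U, V be open subsets of X with U connected and U ∩ V ≠ ∅. Assume the restriction of Φ to V is an open map into Y (so Φ(V) is open in Y) and that Φ : V → Φ(V) is a proper map. Then U ⊆ V if and only if Φ(U) ⊆ Φ(V). -/

import Mathlib

open Filter Set Topology Asymptotics

noncomputable section

/-- Let `Φ : X → Y` be continuous with `X` Hausdorff, `U, V` open,
`U` connected and `U ∩ V ≠ ∅`. If `Φ` restricted to `V` is open and
`Φ : V → Φ(V)` is proper, then `U ⊆ V ↔ Φ(U) ⊆ Φ(V)`. -/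
theorem subset_iff_image_subset
    {X Y : Type*} [TopologicalSpace X] [TopologicalSpace Y] [T2Space X]
    (Φ : X → Y) (hΦ : Continuous Φ) (U V : Set X)
    (hU : IsOpen U) (hV : IsOpen V) (hUconn : IsConnected U)
    (hUV : (U ∩ V).Nonempty)
    (hopen : ∀ s : Set X, IsOpen s → s ⊆ V → IsOpen (Φ '' s))
    (hproper : IsProperMap (Set.MapsTo.restrict Φ V (Φ '' V) (Set.mapsTo_image Φ V))) :
    U ⊆ V ↔ Φ '' U ⊆ Φ '' V := by
  refine ⟨fun h => Set.image_mono h, fun h => ?_⟩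
  refine hUconn.isPreconnected.subset_of_closure_inter_subset hV hUV ?_
  rintro x ⟨hxV, hxU⟩
  have hne : (comap ((↑) : V → X) (𝓝 x)).NeBot := mem_closure_iff_comap_neBot.1 hxV
  let g : Ultrafilter V := Ultrafilter.of (comap ((↑) : V → X) (𝓝 x))
  have hg : Tendsto ((↑) : V → X) g (𝓝 x) :=
    tendsto_comap.mono_left (Ultrafilter.of_le _)
  have hxi : Φ x ∈ Φ '' V := h (Set.mem_image_of_mem Φ hxU)
  have ht : Tendsto (Set.MapsTo.restrict Φ V (Φ '' V) (Set.mapsTo_image Φ V)) g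
      (𝓝 (⟨Φ x, hxi⟩ : Φ '' V)) := by
    rw [tendsto_subtype_rng]
    exact (hΦ.tendsto x).comp hg
  obtain ⟨v, -, hv⟩ := (isProperMap_iff_ultrafilter.1 hproper).2 ht
  have hv' : Tendsto ((↑) : V → X) g (𝓝 (v : X)) :=
    (continuous_subtype_val.tendsto v).mono_left hv
  have hxv : x = v := tendsto_nhds_unique hg hv'
  rw [hxv]
  exact v.2

end
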